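/- For every integer l ≥ 1 and every real q with 0 < q < 1: q^((2l²+1)/(48l)) / ∏_{k=0}^∞ (1 − q^((k+1/2)/l)) = q^(1/16) · (∑ over n ∈ ℤ^{l−1} of q^((1/2)·∑_{j=1}^{l−1} (n_j + j/(2l))²)) / ( ∏_{k=1}^∞ (1−q^k)^{l−1} · ∏_{k=0}^∞ (1 − q^(k+1/2)) ). -/

import Mathlib

open scoped BigOperators
open Finset Filter Topology

/-- Gaussian binomial coefficients by the q-Pascal recursion. -/
noncomputable def gb (q : ℝ) : ℕ → ℕ → ℝ
  | _, 0 => 1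
  | 0, _ + 1 => 0
  | M + 1, j + 1 => gb q M (j + 1) + q ^ (M - j) * gb q M j

noncomputable def qp (q : ℝ) (N : ℕ) : ℝ := ∏ i ∈ range N, (1 - q ^ (i + 1))

lemma gb_zero_right (q : ℝ) (M : ℕ) : gb q M 0 = 1 := by cases M <;> rfl

lemma gb_succ (q : ℝ) (M j : ℕ) :
    gb q (M + 1) (j + 1) = gb q M (j + 1) + q ^ (M - j) * gb q M j := rfl

lemma gb_eq_zero (q : ℝ) (M : ℕ) : ∀ j, M < j → gb q M j = 0 := by
  induction M with
  | zero => intro j hj; obtain ⟨j, rfl⟩ := Nat.exists_eq_succ_of_ne_zero hj.ne'; rfl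
  | succ M ih =>
    intro j hj
    obtain ⟨j, rfl⟩ := Nat.exists_eq_succ_of_ne_zero (by omega : j ≠ 0)
    rw [gb_succ, ih _ (by omega), ih _ (by omega)]; simp

lemma qp_succ (q : ℝ) (N : ℕ) : qp q (N + 1) = qp q N * (1 - q ^ (N + 1)) := by
  simp [qp, prod_range_succ]

lemma gb_closed (q : ℝ) (s : ℕ) : ∀ a b, a + b = s → gb q (a + b) a * (qp q a * qp q b) = qp q (a + b) := by
  induction s with
  | zero => intro a b h; obtain ⟨rfl, rfl⟩ : a = 0 ∧ b = 0 := by omega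
            simp [gb_zero_right, qp]
  | succ s ih =>
    intro a b h
    rcases a with _ | a
    · simp [gb_zero_right, qp]
    rcases b with _ | b
    · have h1 := ih a 0 (by omega)
      have : gb q (a + 1) (a + 1) = gb q a a := by
        rw [gb_succ, gb_eq_zero q a (a + 1) (by omega)]; simp
      simp only [add_zero] at *
      rw [this, qp_succ]
      linear_combination (1 - q ^ (a + 1)) * h1
    · have h1 := ih (a + 1) b (by omega)
      have h2 := ih a (b + 1) (by omega)
      have e1 : a + 1 + (b + 1) = (a + b + 1) + 1 := by omega
      have e2 : a + 1 + b = a + b + 1 := by omega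
      have e3 : a + (b + 1) = a + b + 1 := by omega
      rw [e2] at h1; rw [e3] at h2
      rw [e1, gb_succ, show a + b + 1 - a = b + 1 by omega, qp_succ q (a + b + 1)]
      rw [qp_succ] at h1 h2 ⊢
      rw [qp_succ q b] at *
      have : q ^ (a + b + 1 + 1) = q ^ (b + 1) * q ^ (a + 1) := by ring
      rw [this]
      linear_combination (1 - q ^ (b + 1)) * h1 + q ^ (b + 1) * (1 - q ^ (a + 1)) * h2

lemma qbinom (q y : ℝ) (M : ℕ) : ∏ i ∈ range M, (1 + y * q ^ i) =
    ∑ j ∈ range (M + 1), gb q M j * q ^ (j.choose 2) * y ^ j := by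
  induction M with
  | zero => simp [gb_zero_right]
  | succ M ih =>
    rw [prod_range_succ, ih, mul_add, mul_one, sum_range_succ' _ (M + 1)]
    have : ∀ j ∈ range (M + 1), gb q (M + 1) (j + 1) * q ^ ((j + 1).choose 2) * y ^ (j + 1) =
        gb q M (j + 1) * q ^ ((j + 1).choose 2) * y ^ (j + 1) +
        gb q M j * q ^ (j.choose 2) * y ^ j * (y * q ^ M) := by
      intro j hj
      have hj : j ≤ M := by simpa [Nat.lt_succ_iff] using hj
      rw [gb_succ, Nat.choose_succ_succ' j 1, Nat.choose_one_right]
      have : q ^ M = q ^ (M - j) * q ^ j := by rw [← pow_add]; congr 1; omega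
      rw [this]; ring
    rw [sum_congr rfl this, sum_add_distrib, ← sum_mul]
    have h2 : ∑ j ∈ range (M + 1), gb q M j * q ^ (j.choose 2) * y ^ j =
        ∑ j ∈ range (M + 1), gb q M (j + 1) * q ^ ((j + 1).choose 2) * y ^ (j + 1) + 1 := by
      have := sum_range_succ' (fun j => gb q M j * q ^ (j.choose 2) * y ^ j) (M + 1)
      rw [sum_range_succ, gb_eq_zero q M (M + 1) (by omega)] at this
      simpa [gb_zero_right] using this
    simp only [gb_zero_right]
    nth_rewrite 1 [h2]
    simp; ring

lemma finJTP (q a : ℝ) (hq : 0 < q) (N : ℕ) :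
    q ^ (a ^ 2 / 2) * ((∏ i ∈ range N, (1 + q ^ ((i : ℝ) + 1 / 2 + a))) *
      ∏ i ∈ range N, (1 + q ^ ((i : ℝ) + 1 / 2 - a))) =
    ∑ j ∈ range (2 * N + 1), gb q (2 * N) j * q ^ (((j : ℝ) - N + a) ^ 2 / 2) := by
  have h := qbinom q (q ^ (a + 1 / 2 - (N : ℝ))) (2 * N)
  have h1 : ∏ i ∈ range (2 * N), (1 + q ^ (a + 1 / 2 - (N : ℝ)) * q ^ i) =
      (∏ i ∈ range N, (1 + q ^ ((i : ℝ) + 1 / 2 + a))) *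
      ∏ i ∈ range N, (1 + q ^ (a - 1 / 2 - (i : ℝ))) := by
    rw [two_mul, prod_range_add, mul_comm]
    congr 1
    · refine prod_congr rfl fun i _ => ?_
      rw [← Real.rpow_natCast, ← Real.rpow_add hq]; congr 2; push_cast; ring
    · rw [← prod_range_reflect]
      refine prod_congr rfl fun i hi => ?_
      have hi : i < N := by simpa using hi
      rw [← Real.rpow_natCast, ← Real.rpow_add hq]; congr 2
      have : ((N - 1 - i : ℕ) : ℝ) = N - 1 - i := by
        rw [Nat.sub_sub, Nat.cast_sub (by omega)]; push_cast; ring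
      rw [this]; ring
  have h2 : ∀ N : ℕ, q ^ ((N : ℝ) ^ 2 / 2 - N * a) * ∏ i ∈ range N, (1 + q ^ (a - 1 / 2 - (i : ℝ))) =
      ∏ i ∈ range N, (1 + q ^ ((i : ℝ) + 1 / 2 - a)) := by
    intro N
    induction N with
    | zero => simp
    | succ N ih =>
      rw [prod_range_succ, prod_range_succ, ← ih]
      have e : q ^ (((N + 1 : ℕ) : ℝ) ^ 2 / 2 - (N + 1 : ℕ) * a) =
        q ^ ((N : ℝ) ^ 2 / 2 - N * a) * q ^ ((N : ℝ) + 1 / 2 - a) := by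
        rw [← Real.rpow_add hq]; congr 1; push_cast; ring
      have e2 : q ^ ((N : ℝ) + 1 / 2 - a) * q ^ (a - 1 / 2 - (N : ℝ)) = 1 := by
        rw [← Real.rpow_add hq, ← Real.rpow_zero q]; congr 1; ring
      rw [e]
      linear_combination (q ^ ((N : ℝ) ^ 2 / 2 - N * a) *
        ∏ i ∈ range N, (1 + q ^ (a - 1 / 2 - (i : ℝ)))) * e2
  rw [h1] at h
  rw [← h2 N, show ∀ A B C D : ℝ, A * (B * (C * D)) = (A * C) * (B * D) by intros; ring, h, mul_sum]
  refine sum_congr rfl fun j _ => ?_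
  rw [← Real.rpow_natCast q, ← Real.rpow_natCast (q ^ (a + 1 / 2 - (N : ℝ))),
    ← Real.rpow_mul hq.le, show ∀ A B C D E : ℝ, A * B * (C * D * E) = C * (A * B * D * E) by intros; ring,
    ← Real.rpow_add hq, ← Real.rpow_add hq, ← Real.rpow_add hq, Nat.cast_choose_two]
  congr 2; ring

lemma summ_gauss (q a : ℝ) (hq : 0 < q) (hq1 : q < 1) :
    Summable (fun n : ℤ => q ^ (((n : ℝ) + a) ^ 2 / 2)) := by
  have hlog := Real.log_neg hq hq1
  have hτ : 0 < (Complex.I * ((-Real.log q / (2 * Real.pi) : ℝ) : ℂ)).im := by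
    simp only [Complex.I_mul_im, Complex.ofReal_re]
    have := Real.pi_pos
    have : 0 < - Real.log q := by linarith
    positivity
  have h := ((summable_jacobiTheta₂_term_iff
    (Complex.I * ((-a * Real.log q / (2 * Real.pi) : ℝ) : ℂ)) _).2 hτ).norm.mul_left
      (q ^ (a ^ 2 / 2))
  refine h.congr fun n => ?_
  rw [norm_jacobiTheta₂_term, Complex.I_mul_im, Complex.I_mul_im, Complex.ofReal_re,
    Complex.ofReal_re, Real.rpow_def_of_pos hq, Real.rpow_def_of_pos hq, ← Real.exp_add]
  congr 1
  have := Real.pi_pos.ne'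
  field_simp
  ring

lemma hasSum_pi (m : ℕ) (f : Fin m → ℤ → ℝ) (hf : ∀ j, Summable (f j)) (h0 : ∀ j n, 0 ≤ f j n) :
    HasSum (fun n : Fin m → ℤ => ∏ j, f j (n j)) (∏ j, ∑' n, f j n) := by
  induction m with
  | zero => simp
  | succ m ih =>
    have h := ih (fun j => f j.succ) (fun j => hf _) (fun j n => h0 _ _)
    have hs := (hf 0).mul_of_nonneg h.summable (fun n => h0 0 n)
      (fun n => prod_nonneg fun j _ => h0 _ _)
    have h2 := (hf 0).hasSum.mul h hs
    rw [Fin.prod_univ_succ]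
    rw [← (Fin.consEquiv (fun _ : Fin (m + 1) => ℤ)).hasSum_iff]
    refine h2.congr_fun fun x => ?_
    simp only [Function.comp, Fin.prod_univ_succ]
    rfl

lemma tlim (f : ℕ → ℝ) (hf : Summable f) :
    Tendsto (fun N => ∏ i ∈ range N, (1 + f i)) atTop (𝓝 (∏' i, (1 + f i))) :=
  (Real.multipliable_one_add_of_summable hf).hasProd.tendsto_prod_nat

lemma tlim' (f : ℕ → ℝ) (hf : Summable f) :
    Tendsto (fun N => ∏ i ∈ range N, (1 - f i)) atTop (𝓝 (∏' i, (1 - f i))) := by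
  simpa [sub_eq_add_neg] using tlim (fun i => - f i) hf.neg

lemma tne' (f : ℕ → ℝ) (hf : Summable f) (h0 : ∀ i, 0 < f i) (h1 : ∀ i, f i < 1) :
    (∏' i, (1 - f i)) ≠ 0 := by
  have := tprod_one_add_ne_zero_of_summable (f := fun i => - f i)
    (fun i => by have := h1 i; linarith)
    (by simpa using hf.norm)
  simpa [sub_eq_add_neg] using this

lemma summ_x (x : ℝ) (h0 : 0 < x) (h1 : x < 1) (c d : ℕ) (hc : 0 < c) :
    Summable (fun k : ℕ => x ^ (c * k + d)) := by
  have := (summable_geometric_of_lt_one (by positivity) (pow_lt_one₀ h0.le h1 hc.ne')).mul_right (x ^ d)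
  refine this.congr fun k => ?_
  rw [pow_add, pow_mul]

lemma euler (x : ℝ) (h0 : 0 < x) (h1 : x < 1) :
    (∏' k : ℕ, (1 - x ^ (2 * k + 1))) * ∏' k : ℕ, (1 + x ^ (k + 1)) = 1 := by
  have s1 := summ_x x h0 h1 1 1 one_pos
  simp only [one_mul] at s1
  have tE := tlim' _ s1
  have tA := tlim _ s1
  have tF := tlim' _ (summ_x x h0 h1 2 1 two_pos)
  have tE2 := tE.comp (tendsto_id.const_mul_atTop' (two_pos : (0:ℕ) < 2))
  have hE : (∏' k : ℕ, (1 - x ^ (k + 1))) ≠ 0 :=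
    tne' _ s1 (fun i => by positivity) (fun i => pow_lt_one₀ h0.le h1 (by omega))
  have key : ∀ N, ∏ i ∈ range (2 * N), (1 - x ^ (i + 1)) =
     (∏ i ∈ range N, (1 - x ^ (2 * i + 1))) * ((∏ i ∈ range N, (1 - x ^ (i + 1))) *
      ∏ i ∈ range N, (1 + x ^ (i + 1))) := by
    intro N
    induction N with
    | zero => simp
    | succ N ih =>
      rw [show 2 * (N + 1) = 2 * N + 1 + 1 by ring, prod_range_succ, prod_range_succ, ih,
        prod_range_succ, prod_range_succ, prod_range_succ]
      ring
  have := tendsto_nhds_unique tE2 ((tF.mul (tE.mul tA)).congr fun N => (key N).symm)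
  apply mul_left_cancel₀ hE
  linarith

lemma block (m : ℕ) (f : ℕ → ℝ) : ∏ i ∈ range (2 * (m + 1)), f (i + 1) =
    f (m + 1) * f (2 * (m + 1)) * ∏ j ∈ range m, (f (m + 1 + (j + 1)) * f (m + 1 - (j + 1))) := by
  rw [two_mul, prod_range_add, prod_range_succ, prod_range_succ, prod_mul_distrib,
    ← prod_range_reflect (fun i => f (i + 1))]
  have : ∏ j ∈ range m, f (m - 1 - j + 1) = ∏ j ∈ range m, f (m + 1 - (j + 1)) :=
    prod_congr rfl fun j hj => by
      have : j < m := by simpa using hj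
      congr 1; omega
  rw [this]; simp only [add_assoc]; ring

lemma blocks (m : ℕ) (x : ℝ) (N : ℕ) : ∏ i ∈ range (2 * (m + 1) * N), (1 + x ^ (i + 1)) =
    (∏ i ∈ range (2 * N), (1 + (x ^ (m + 1)) ^ (i + 1))) *
    ∏ j ∈ range m, ((∏ k ∈ range N, (1 + x ^ (2 * (m + 1) * k + (m + 1 + (j + 1))))) *
       ∏ k ∈ range N, (1 + x ^ (2 * (m + 1) * k + (m + 1 - (j + 1))))) := by
  induction N with
  | zero => simp
  | succ N ih =>
    have := block m (fun i => 1 + x ^ (2 * (m + 1) * N + i))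
    rw [mul_add, mul_one, prod_range_add, ih]
    simp only [add_assoc] at this ⊢
    rw [this, show 2 * (N + 1) = 2 * N + 1 + 1 by ring, prod_range_succ, prod_range_succ]
    simp only [prod_range_succ _ N, prod_mul_distrib]
    simp only [← pow_mul]
    ring_nf

lemma summ_r (q c : ℝ) (h0 : 0 < q) (h1 : q < 1) :
    Summable (fun k : ℕ => q ^ ((k : ℝ) + c)) := by
  refine ((summable_geometric_of_lt_one h0.le h1).mul_right (q ^ c)).congr fun k => ?_
  rw [Real.rpow_add h0, Real.rpow_natCast]

lemma qp_bounds (q : ℝ) (h0 : 0 < q) (h1 : q < 1) :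
    Tendsto (qp q) atTop (𝓝 (∏' k : ℕ, (1 - q ^ (k + 1)))) ∧ 0 < ∏' k : ℕ, (1 - q ^ (k + 1)) ∧
    (∀ N, (∏' k : ℕ, (1 - q ^ (k + 1))) ≤ qp q N) ∧ (∀ N, 0 < qp q N) ∧ (∀ N, qp q N ≤ 1) := by
  have s1 := summ_x q h0 h1 1 1 one_pos
  simp only [one_mul] at s1
  have t : Tendsto (qp q) atTop (𝓝 (∏' k : ℕ, (1 - q ^ (k + 1)))) := tlim' _ s1
  have hlt : ∀ i : ℕ, q ^ (i + 1) < 1 := fun i => pow_lt_one₀ h0.le h1 (by omega)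
  have hE := tne' _ s1 (fun i => by positivity) hlt
  have hpos : ∀ N, 0 < qp q N := fun N => prod_pos fun i _ => by linarith [hlt i]
  have hanti : Antitone (qp q) := antitone_nat_of_succ_le fun N => by
    rw [qp_succ]
    have : 0 < q ^ (N + 1) := by positivity
    nlinarith [hpos N]
  refine ⟨t, lt_of_le_of_ne (ge_of_tendsto' t fun N => (hpos N).le) hE.symm,
    fun N => hanti.le_of_tendsto t N, hpos, fun N => ?_⟩
  simpa [qp] using hanti (Nat.zero_le N)

lemma gb_bounds (q : ℝ) (h0 : 0 < q) (h1 : q < 1) (M j : ℕ) :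
    0 ≤ gb q M j ∧ gb q M j ≤ ((∏' k : ℕ, (1 - q ^ (k + 1))) ^ 2)⁻¹ := by
  obtain ⟨t, hE, hle, hpos, h1'⟩ := qp_bounds q h0 h1
  rcases lt_or_ge M j with h | h
  · rw [gb_eq_zero q M j h]; exact ⟨le_rfl, by positivity⟩
  · obtain ⟨b, rfl⟩ := Nat.exists_eq_add_of_le h
    have hc := gb_closed q _ j b rfl
    have hp := mul_pos (hpos j) (hpos b)
    have e : gb q (j + b) j = qp q (j + b) / (qp q j * qp q b) := by
      rw [eq_div_iff hp.ne', hc]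
    rw [e]
    refine ⟨div_nonneg (hpos _).le hp.le, ?_⟩
    rw [← one_div, sq]
    exact div_le_div₀ zero_le_one (h1' _) (mul_pos hE hE)
      (mul_le_mul (hle _) (hle _) hE.le (hpos _).le)

lemma jtp (q a : ℝ) (h0 : 0 < q) (h1 : q < 1) :
    ∑' n : ℤ, q ^ (((n : ℝ) + a) ^ 2 / 2) = q ^ (a ^ 2 / 2) * (∏' k : ℕ, (1 - q ^ (k + 1))) *
      ((∏' k : ℕ, (1 + q ^ ((k : ℝ) + 1 / 2 + a))) * ∏' k : ℕ, (1 + q ^ ((k : ℝ) + 1 / 2 - a))) := by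
  obtain ⟨t, hE, hle, hpos, h1'⟩ := qp_bounds q h0 h1
  set E := ∏' k : ℕ, (1 - q ^ (k + 1)) with hEdef
  let F : ℕ → ℤ → ℝ := fun N n =>
    if -(N : ℤ) ≤ n then gb q (2 * N) (n + N).toNat * q ^ (((n : ℝ) + a) ^ 2 / 2) else 0
  have hF : ∀ N, ∑' n, F N n = q ^ (a ^ 2 / 2) * ((∏ i ∈ range N, (1 + q ^ ((i : ℝ) + 1 / 2 + a))) *
      ∏ i ∈ range N, (1 + q ^ ((i : ℝ) + 1 / 2 - a))) := by
    intro N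
    rw [finJTP q a h0 N]
    let e : ℕ ↪ ℤ := ⟨fun j => (j : ℤ) - N, fun i j h => by simpa using h⟩
    rw [tsum_eq_sum (s := (range (2 * N + 1)).map e), sum_map]
    · refine sum_congr rfl fun j _ => ?_
      have : e j = (j : ℤ) - N := rfl
      simp [F, this]
    · intro n hn
      simp only [F]
      split_ifs with h
      · rw [gb_eq_zero, zero_mul]
        by_contra hc
        apply hn
        rw [Finset.mem_map]
        refine ⟨(n + N).toNat, by simp; omega, ?_⟩
        show ((n + N).toNat : ℤ) - N = n
        omega
      · rfl
  have hlim : Tendsto (fun N => ∑' n, F N n) atTop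
      (𝓝 (∑' n : ℤ, E⁻¹ * q ^ (((n : ℝ) + a) ^ 2 / 2))) := by
    refine tendsto_tsum_of_dominated_convergence
      (bound := fun n : ℤ => (E ^ 2)⁻¹ * q ^ (((n : ℝ) + a) ^ 2 / 2))
      ((summ_gauss q a h0 h1).mul_left _) ?_ ?_
    · intro n
      have hg : Tendsto (fun N : ℕ => gb q (2 * N) (n + N).toNat) atTop (𝓝 E⁻¹) := by
        have ha : Tendsto (fun N : ℕ => (n + N).toNat) atTop atTop := by
          refine tendsto_atTop.2 fun b => ?_
          filter_upwards [eventually_ge_atTop (b + n.natAbs)] with N hN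
          omega
        have hb : Tendsto (fun N : ℕ => ((N : ℤ) - n).toNat) atTop atTop := by
          refine tendsto_atTop.2 fun b => ?_
          filter_upwards [eventually_ge_atTop (b + n.natAbs)] with N hN
          omega
        have hc : Tendsto (fun N : ℕ => 2 * N) atTop atTop := by
          refine tendsto_atTop.2 fun b => ?_
          filter_upwards [eventually_ge_atTop b] with N hN
          omega
        have := (t.comp hc).div ((t.comp ha).mul (t.comp hb)) (mul_pos hE hE).ne'
        rw [show E / (E * E) = E⁻¹ by field_simp] at this
        refine this.congr' ?_
        filter_upwards [eventually_ge_atTop n.natAbs] with N hN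
        have hs : (n + N).toNat + ((N : ℤ) - n).toNat = 2 * N := by omega
        have hcl := gb_closed q _ (n + N).toNat ((N : ℤ) - n).toNat rfl
        rw [hs] at hcl
        simp only [Function.comp, Pi.div_apply]
        rw [div_eq_iff (mul_pos (hpos _) (hpos _)).ne', hcl]
      refine (hg.mul_const _).congr' ?_
      filter_upwards [eventually_ge_atTop n.natAbs] with N hN
      simp only [F]
      rw [if_pos (by omega)]
    · refine Eventually.of_forall fun N n => ?_
      have hp : 0 < q ^ (((n : ℝ) + a) ^ 2 / 2) := Real.rpow_pos_of_pos h0 _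
      obtain ⟨g0, g1⟩ := gb_bounds q h0 h1 (2 * N) (n + N).toNat
      simp only [F]
      split_ifs
      · rw [Real.norm_of_nonneg (mul_nonneg g0 hp.le)]
        exact mul_le_mul_of_nonneg_right g1 hp.le
      · simp only [norm_zero]; positivity
  simp only [hF] at hlim
  have hr : Tendsto (fun N => q ^ (a ^ 2 / 2) *
      ((∏ i ∈ range N, (1 + q ^ ((i : ℝ) + 1 / 2 + a))) *
      ∏ i ∈ range N, (1 + q ^ ((i : ℝ) + 1 / 2 - a)))) atTop (𝓝 (q ^ (a ^ 2 / 2) *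
      ((∏' k : ℕ, (1 + q ^ ((k : ℝ) + 1 / 2 + a))) *
        ∏' k : ℕ, (1 + q ^ ((k : ℝ) + 1 / 2 - a))))) := by
    refine Tendsto.const_mul _ (Tendsto.mul ?_ ?_)
    · refine tlim _ ((summ_r q (1 / 2 + a) h0 h1).congr fun k => ?_)
      rw [add_assoc]
    · refine tlim _ ((summ_r q (1 / 2 - a) h0 h1).congr fun k => ?_)
      rw [add_sub_assoc]
  have := tendsto_nhds_unique hlim hr
  rw [tsum_mul_left, inv_mul_eq_iff_eq_mul₀ hE.ne'] at this
  rw [this]; ring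

lemma prodP (m : ℕ) (x : ℝ) (h0 : 0 < x) (h1 : x < 1) :
    ∏' k : ℕ, (1 + x ^ (k + 1)) = (∏' k : ℕ, (1 + (x ^ (m + 1)) ^ (k + 1))) *
    ∏ j ∈ range m, ((∏' k : ℕ, (1 + x ^ (2 * (m + 1) * k + (m + 1 + (j + 1))))) *
       ∏' k : ℕ, (1 + x ^ (2 * (m + 1) * k + (m + 1 - (j + 1))))) := by
  have s1 := summ_x x h0 h1 1 1 one_pos
  have s2 := summ_x (x ^ (m + 1)) (by positivity) (pow_lt_one₀ h0.le h1 (by omega)) 1 1 one_pos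
  simp only [one_mul] at s1 s2
  have L := (tlim _ s1).comp (tendsto_id.const_mul_atTop' (by omega : 0 < 2 * (m + 1)))
  have R1 := (tlim _ s2).comp (tendsto_id.const_mul_atTop' (by omega : 0 < 2))
  have R2 := tendsto_finsetProd (range m) fun j (_ : j ∈ range m) =>
    (tlim _ (summ_x x h0 h1 (2 * (m + 1)) (m + 1 + (j + 1)) (by omega))).mul
    (tlim _ (summ_x x h0 h1 (2 * (m + 1)) (m + 1 - (j + 1)) (by omega)))
  refine tendsto_nhds_unique L ((R1.mul R2).congr fun N => ?_)
  exact (blocks m x N).symm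

lemma sum_sq (m : ℕ) : ∑ j ∈ range m, ((j : ℝ) + 1) ^ 2 = (m : ℝ) * (m + 1) * (2 * m + 1) / 6 := by
  induction m with
  | zero => simp
  | succ m ih => rw [sum_range_succ, ih]; push_cast; ring

/-- Character identity for the conjugation `[l]₋ ∼ [1]₋ · ∏_{j=1}^{l−1} [1, e^{2πi·j/(2l)}]₊`:
    `q^((2l²+1)/(48l)) / ∏_{k≥0}(1 − q^((k+1/2)/l))
     = q^(1/16) · Θ/(∏_{k≥1}(1−q^k)^{l−1} · ∏_{k≥0}(1−q^(k+1/2)))`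
    where `Θ` is the lattice sum over `ℤ^{l−1}` with charges `j/(2l)`. -/
theorem stmt16 (l : ℕ) (hl : 1 ≤ l) (q : ℝ) (hq0 : 0 < q) (hq1 : q < 1) :
    q ^ ((2 * (l : ℝ) ^ 2 + 1) / (48 * l)) / ∏' k : ℕ, (1 - q ^ (((k : ℝ) + 1 / 2) / l)) =
      q ^ ((1 : ℝ) / 16) *
        (∑' n : Fin (l - 1) → ℤ,
          q ^ ((1 / 2 : ℝ) * ∑ j : Fin (l - 1), ((n j : ℝ) + ((j.val : ℝ) + 1) / (2 * l)) ^ 2)) /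
        ((∏' k : ℕ, (1 - q ^ (k + 1)) ^ (l - 1)) * ∏' k : ℕ, (1 - q ^ ((k : ℝ) + 1 / 2))) := by
  obtain ⟨m, rfl⟩ : ∃ m, l = m + 1 := ⟨l - 1, by omega⟩
  simp only [Nat.add_sub_cancel]
  have hl0 : (0 : ℝ) < ((m + 1 : ℕ) : ℝ) := by positivity
  set L : ℝ := ((m + 1 : ℕ) : ℝ) with hL
  have hLm : L = m + 1 := by rw [hL]; push_cast; ring
  obtain ⟨x, hx0, hx1, hxr⟩ : ∃ x : ℝ, 0 < x ∧ x < 1 ∧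
      ∀ (t : ℝ) (n : ℕ), t * (2 * L) = n → q ^ t = x ^ n := by
    refine ⟨q ^ (1 / (2 * L)), by positivity, Real.rpow_lt_one hq0.le hq1 (by positivity), ?_⟩
    intro t n h
    rw [← Real.rpow_natCast, ← Real.rpow_mul hq0.le, ← h]
    congr 1; field_simp
  -- the theta sum
  have hT : ∑' n : Fin m → ℤ,
      q ^ ((1 / 2 : ℝ) * ∑ j : Fin m, ((n j : ℝ) + ((j.val : ℝ) + 1) / (2 * L)) ^ 2) =
      ∏ j : Fin m, ∑' n : ℤ, q ^ (((n : ℝ) + ((j.val : ℝ) + 1) / (2 * L)) ^ 2 / 2) := by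
    rw [← (hasSum_pi m (fun j n => q ^ (((n : ℝ) + ((j.val : ℝ) + 1) / (2 * L)) ^ 2 / 2))
      (fun j => summ_gauss q _ hq0 hq1) (fun j n => by positivity)).tsum_eq]
    refine tsum_congr fun n => ?_
    rw [← Real.rpow_sum_of_pos hq0, ← sum_div]
    congr 1; ring
  have hT' : ∑' n : Fin (m + 1 - 1) → ℤ,
      q ^ ((1 / 2 : ℝ) * ∑ j : Fin (m + 1 - 1), ((n j : ℝ) + ((j.val : ℝ) + 1) / (2 * L)) ^ 2) =
      ∏ j : Fin m, ∑' n : ℤ, q ^ (((n : ℝ) + ((j.val : ℝ) + 1) / (2 * L)) ^ 2 / 2) := hT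
  rw [hT']
  simp only [jtp q _ hq0 hq1]
  rw [Fin.prod_univ_eq_prod_range (fun j : ℕ => q ^ ((((j : ℝ) + 1) / (2 * L)) ^ 2 / 2) *
    (∏' k : ℕ, (1 - q ^ (k + 1))) *
      ((∏' k : ℕ, (1 + q ^ ((k : ℝ) + 1 / 2 + ((j : ℝ) + 1) / (2 * L)))) *
        ∏' k : ℕ, (1 + q ^ ((k : ℝ) + 1 / 2 - ((j : ℝ) + 1) / (2 * L))))) m]
  rw [prod_mul_distrib, prod_mul_distrib, prod_const, card_range, ← Real.rpow_sum_of_pos hq0]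
  have hexp : q ^ ((2 * L ^ 2 + 1) / (48 * L)) = q ^ ((1 : ℝ) / 16) *
      q ^ (∑ j ∈ range m, (((j : ℝ) + 1) / (2 * L)) ^ 2 / 2) := by
    rw [← Real.rpow_add hq0]
    congr 1
    simp only [div_pow]
    rw [← sum_div, ← sum_div, sum_sq]
    field_simp
    rw [hLm]; ring
  have s1 := summ_x q hq0 hq1 1 1 one_pos
  simp only [one_mul] at s1
  have hEpow : ∏' k : ℕ, (1 - q ^ (k + 1)) ^ m = (∏' k : ℕ, (1 - q ^ (k + 1))) ^ m := by
    refine Multipliable.tprod_pow ?_ m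
    simpa [sub_eq_add_neg] using Real.multipliable_one_add_of_summable s1.neg
  have hE := (qp_bounds q hq0 hq1).2.1
  have hO' : ∏' k : ℕ, (1 - q ^ (((k : ℝ) + 1 / 2) / L)) = ∏' k : ℕ, (1 - x ^ (2 * k + 1)) :=
    tprod_congr fun k => by
      rw [hxr _ (2 * k + 1)]; push_cast; field_simp
  have hO : ∏' k : ℕ, (1 - q ^ ((k : ℝ) + 1 / 2)) =
      ∏' k : ℕ, (1 - (x ^ (m + 1)) ^ (2 * k + 1)) :=
    tprod_congr fun k => by
      rw [hxr _ ((m + 1) * (2 * k + 1)), pow_mul]; push_cast; rw [hLm]; ring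
  have hP : ∏ j ∈ range m, ((∏' k : ℕ, (1 + q ^ ((k : ℝ) + 1 / 2 + ((j : ℝ) + 1) / (2 * L)))) *
        ∏' k : ℕ, (1 + q ^ ((k : ℝ) + 1 / 2 - ((j : ℝ) + 1) / (2 * L)))) =
      ∏ j ∈ range m, ((∏' k : ℕ, (1 + x ^ (2 * (m + 1) * k + (m + 1 + (j + 1))))) *
       ∏' k : ℕ, (1 + x ^ (2 * (m + 1) * k + (m + 1 - (j + 1))))) := by
    refine prod_congr rfl fun j hj => ?_
    have hj : j < m := by simpa using hj
    congr 1
    · refine tprod_congr fun k => ?_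
      rw [hxr _ (2 * (m + 1) * k + (m + 1 + (j + 1)))]
      push_cast; field_simp; rw [hLm]; ring
    · refine tprod_congr fun k => ?_
      rw [hxr _ (2 * (m + 1) * k + (m + 1 - (j + 1)))]
      rw [Nat.cast_add, Nat.cast_sub (by omega)]
      push_cast; field_simp; rw [hLm]; ring
  rw [hP, hO, hO', hEpow, hexp]
  have e1 := euler x hx0 hx1
  have e2 := euler (x ^ (m + 1)) (by positivity) (pow_lt_one₀ hx0.le hx1 (by omega))
  have e3 := prodP m x hx0 hx1
  rw [e3] at e1
  have n1 := left_ne_zero_of_mul_eq_one e1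
  have n2 := left_ne_zero_of_mul_eq_one e2
  generalize (∏' k : ℕ, (1 - x ^ (2 * k + 1))) = O' at *
  generalize (∏' k : ℕ, (1 - (x ^ (m + 1)) ^ (2 * k + 1))) = O at *
  generalize (∏' k : ℕ, (1 + (x ^ (m + 1)) ^ (k + 1))) = A at *
  generalize (∏ j ∈ range m, ((∏' k : ℕ, (1 + x ^ (2 * (m + 1) * k + (m + 1 + (j + 1))))) *
       ∏' k : ℕ, (1 + x ^ (2 * (m + 1) * k + (m + 1 - (j + 1)))))) = P at *
  generalize (∏' k : ℕ, (1 - q ^ (k + 1))) = E at *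
  have key : O = O' * P := by linear_combination (-O) * e1 + O' * P * e2
  have hEm : E ^ m ≠ 0 := pow_ne_zero _ hE.ne'
  rw [div_eq_div_iff n1 (mul_ne_zero hEm n2), key]
  ring
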